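/- There is a constant C₀ such that the following holds for every C ≥ C₀, every integer n ≥ 2, every integer M ≥ 1, and every weighted digraph G on a vertex set V of size n with all edge weights in {1,2,…,M}. Let π : V → {1,…,n} be a uniformly random bijection. Then with probability at least 1 − n^{2 − C/1.1}, for every pair of vertices u, v such that ‖uv‖ < ∞ and some shortest path from u to v has at least one internal vertex, there exist a shortest path P from u to v and an internal vertex z of P with π(z) ≤ C·M·n·ln(n)/‖uv‖. -/

import Mathlib

/-- The length of a walk `p` (a list of vertices) in the weighted digraph with
weight function `W`, i.e. the sum of the weights of consecutive pairs. -/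
def walkLen {V : Type*} (W : V → V → ℕ∞) (p : List V) : ℕ∞ :=
  ((p.zip p.tail).map fun q => W q.1 q.2).sum

/-- `p` is a walk from `u` to `v`: it is nonempty, starts at `u`, ends at `v`,
and every consecutive pair is an edge (finite weight). -/
def IsWalk {V : Type*} (W : V → V → ℕ∞) (u v : V) (p : List V) : Prop :=
  p.head? = some u ∧ p.getLast? = some v ∧ p.Chain' fun x y => W x y ≠ ⊤

/-- The distance from `u` to `v`: the infimum of lengths of walks from `u` to `v`
(`⊤` if there is no walk). -/
noncomputable def gdist {V : Type*} (W : V → V → ℕ∞) (u v : V) : ℕ∞ :=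
  sInf {d | ∃ p, IsWalk W u v p ∧ walkLen W p = d}

/-- `p` is a shortest path from `u` to `v`: a walk from `u` to `v` whose length
equals the distance. -/
def IsShortestPath {V : Type*} (W : V → V → ℕ∞) (u v : V) (p : List V) : Prop :=
  IsWalk W u v p ∧ walkLen W p = gdist W u v

/-!
A shortest path `P` from `u` to `v` is simple, so if it has `k` internal vertices then
`‖uv‖ ≤ (k + 1) M`, and the threshold `R = C M n ln n / ‖uv‖` is at least `C n ln n / (k + 1)`.
A random bijection sends all `k` internal vertices beyond position `R` with probability at most
`(1 - R / n) ^ k ≤ exp (-k R / n)`. If `R < n` then `k R / n = (k + 1) R / n - R / n` differs from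
`(k + 1) R / n ≥ C ln n` by at most `1`, and rounding `R` costs another `1`, so the exponent is at
least `C ln n - 2 ≥ (C / 1.1) ln n` as soon as `C ln 2 ≥ 22`, which `C ≥ 32` ensures. A union
bound over the `n ^ 2` pairs `(u, v)` concludes.
-/

section Walks

variable {V : Type*} {W : V → V → ℕ∞} {u v x y z : V} {l p : List V} {M : ℕ}

theorem walkLen_cons_cons : walkLen W (x :: y :: l) = W x y + walkLen W (y :: l) := by
  simp [walkLen]

theorem isWalk_cons_cons :
    IsWalk W u v (x :: y :: l) ↔ x = u ∧ W x y ≠ ⊤ ∧ IsWalk W y v (y :: l) := by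
  constructor
  · rintro ⟨hu, hv, hchain⟩
    obtain ⟨hxy, hl⟩ := List.isChain_cons_cons.1 hchain
    exact ⟨Option.some.inj hu, hxy, rfl, List.getLast?_cons_cons.symm.trans hv, hl⟩
  · rintro ⟨rfl, hxy, -, hv, hl⟩
    exact ⟨rfl, List.getLast?_cons_cons.trans hv, List.isChain_cons_cons.2 ⟨hxy, hl⟩⟩

theorem IsWalk.gdist_le (hp : IsWalk W u v p) : gdist W u v ≤ walkLen W p :=
  sInf_le ⟨p, hp, rfl⟩

theorem IsWalk.walkLen_ne_top (hp : IsWalk W u v p) : walkLen W p ≠ ⊤ := by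
  induction p generalizing u with
  | nil => simp [walkLen]
  | cons x l ih =>
    cases l with
    | nil => simp [walkLen]
    | cons y l =>
      obtain ⟨-, hxy, hyv⟩ := isWalk_cons_cons.1 hp
      rw [walkLen_cons_cons]
      exact WithTop.add_ne_top.2 ⟨hxy, ih hyv⟩

theorem IsWalk.walkLen_le (hM : ∀ x y, W x y ≠ ⊤ → W x y ≤ M) (hp : IsWalk W u v p) :
    walkLen W p ≤ p.tail.length * M := by
  induction p generalizing u with
  | nil => simp [walkLen]
  | cons x l ih =>
    cases l with
    | nil => simp [walkLen]
    | cons y l =>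
      obtain ⟨-, hxy, hyv⟩ := isWalk_cons_cons.1 hp
      calc walkLen W (x :: y :: l) = W x y + walkLen W (y :: l) := walkLen_cons_cons
        _ ≤ M + l.length * M := add_le_add (hM x y hxy) (ih hyv)
        _ = (y :: l).length * M := by push_cast [List.length_cons]; ring

theorem IsWalk.exists_walk_of_mem (hp : IsWalk W u v p) (hz : z ∈ p) :
    ∃ q, IsWalk W z v q ∧ walkLen W q ≤ walkLen W p := by
  induction p generalizing u with
  | nil => simp at hz
  | cons x l ih =>
    obtain rfl | hzl := List.mem_cons.1 hz
    · exact ⟨z :: l, ⟨rfl, hp.2⟩, le_rfl⟩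
    · cases l with
      | nil => simp at hzl
      | cons y l =>
        obtain ⟨q, hq, hle⟩ := ih (isWalk_cons_cons.1 hp).2.2 hzl
        exact ⟨q, hq, hle.trans (walkLen_cons_cons (W := W) ▸ le_add_self)⟩

theorem IsShortestPath.of_cons_cons (hp : IsShortestPath W u v (x :: y :: l)) :
    IsShortestPath W y v (y :: l) := by
  obtain ⟨hwalk, hlen⟩ := hp
  obtain ⟨rfl, hxy, hyv⟩ := isWalk_cons_cons.1 hwalk
  refine ⟨hyv, le_antisymm (le_sInf ?_) hyv.gdist_le⟩
  rintro _ ⟨q, hq, rfl⟩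
  obtain ⟨q, rfl⟩ := List.head?_eq_some_iff.1 hq.1
  rw [← ENat.add_le_add_iff_left hxy, ← walkLen_cons_cons, ← walkLen_cons_cons, hlen]
  exact (isWalk_cons_cons.2 ⟨rfl, hxy, hq⟩).gdist_le

theorem IsShortestPath.nodup (hW : ∀ x y, W x y ≠ 0) (hp : IsShortestPath W u v p) :
    p.Nodup := by
  induction p generalizing u with
  | nil => exact List.nodup_nil
  | cons x l ih =>
    cases l with
    | nil => exact List.nodup_singleton x
    | cons y l =>
      refine List.nodup_cons.2 ⟨fun hx => ?_, ih hp.of_cons_cons⟩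
      obtain ⟨rfl, -, hyv⟩ := isWalk_cons_cons.1 hp.1
      obtain ⟨q, hq, hle⟩ := hyv.exists_walk_of_mem hx
      have hshortcut : W x y + walkLen W (y :: l) ≤ walkLen W (y :: l) :=
        calc W x y + walkLen W (y :: l) = gdist W x v := walkLen_cons_cons.symm.trans hp.2
          _ ≤ walkLen W (y :: l) := hq.gdist_le.trans hle
      exact hshortcut.not_gt (ENat.lt_add_left hyv.walkLen_ne_top (pos_of_ne_zero (hW x y)))

theorem IsShortestPath.toNat_gdist_pos (hW : ∀ x y, W x y ≠ 0) (hp : IsShortestPath W u v p)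
    (hne : p.tail ≠ []) : 0 < (gdist W u v).toNat := by
  rw [← hp.2]
  refine ENat.toNat_pos ?_ hp.1.walkLen_ne_top
  match p, hne with
  | x :: y :: l, _ => simp [walkLen_cons_cons, hW x y]

theorem IsShortestPath.toNat_gdist_le [DecidableEq V] (hW : ∀ x y, W x y ≠ 0)
    (hM : ∀ x y, W x y ≠ ⊤ → W x y ≤ M) (hp : IsShortestPath W u v p) :
    (gdist W u v).toNat ≤ (p.tail.dropLast.toFinset.card + 1) * M := by
  have hnodup : p.tail.dropLast.Nodup :=
    (hp.nodup hW).sublist ((List.dropLast_sublist _).trans (List.tail_sublist _))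
  rw [← hp.2, List.toFinset_card_of_nodup hnodup, List.length_dropLast]
  refine (ENat.toNat_le_of_le_natCast (mod_cast hp.1.walkLen_le hM)).trans ?_
  gcongr
  omega

end Walks

section BijectionsInto

open Finset

variable {V T : Type*} [Fintype V] [DecidableEq V] [Fintype T] [DecidableEq T]
  {S S' : Finset V} {B : Finset T} {z : V}

/-- The event that a random bijection `V ≃ T` maps `S` into `B`, as the finset of favourable
bijections. -/
def bijectionsInto (S : Finset V) (B : Finset T) : Finset (V ≃ T) :=
  {π | ∀ x ∈ S, π x ∈ B}

theorem mem_bijectionsInto {π : V ≃ T} : π ∈ bijectionsInto S B ↔ ∀ x ∈ S, π x ∈ B := by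
  simp [bijectionsInto]

theorem bijectionsInto_empty_right (hS : S.Nonempty) :
    bijectionsInto S (∅ : Finset T) = ∅ := by
  obtain ⟨x, hx⟩ := hS
  exact eq_empty_of_forall_notMem fun π hπ => notMem_empty _ (mem_bijectionsInto.1 hπ x hx)

theorem bijectionsInto_insert :
    bijectionsInto (insert z S) B = {π ∈ bijectionsInto S B | π z ∈ B} := by
  ext π
  simp [mem_bijectionsInto, and_comm]

theorem card_bijectionsInto_congr (h : #S = #S') :
    #(bijectionsInto S B) = #(bijectionsInto S' B) := by
  let σ : Equiv.Perm V := (equivOfCardEq h).extendSubtype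
  have hσ (x : V) : x ∈ S ↔ σ x ∈ S' :=
    ⟨(equivOfCardEq h).extendSubtype_mem x,
      not_imp_not.1 ((equivOfCardEq h).extendSubtype_not_mem x)⟩
  refine card_equiv (σ.equivCongr (Equiv.refl T)) fun π => ?_
  rw [mem_bijectionsInto, mem_bijectionsInto]
  exact σ.forall_congr fun x => by simp [hσ]

theorem card_filter_compl_of_mem_bijectionsInto {π : V ≃ T} (hπ : π ∈ bijectionsInto S B) :
    #{w ∈ Sᶜ | π w ∈ B} = #B - #S := by
  rw [mem_bijectionsInto] at hπ
  have himage : S.map π.toEmbedding ⊆ B := map_subset_iff_subset_preimage.2 fun x hx => by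
    simpa using hπ x hx
  rw [← card_map π.toEmbedding (s := S), ← card_sdiff_of_subset himage]
  refine card_equiv π fun w => ?_
  simp [and_comm]

-- Double counting of the pairs `(w, π)` with `w ∉ S`, `π` mapping `S` into `B`, and `π w ∈ B`:
-- the number of admissible `π` is the same for all `w`.
theorem card_compl_mul_card_bijectionsInto_insert (hz : z ∉ S) :
    #Sᶜ * #(bijectionsInto (insert z S) B) = #(bijectionsInto S B) * (#B - #S) := by
  refine card_mul_eq_card_mul (fun w (π : V ≃ T) => π w ∈ B) (fun w hw => ?_)
    fun π hπ => card_filter_compl_of_mem_bijectionsInto hπ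
  rw [bipartiteAbove, ← bijectionsInto_insert]
  apply card_bijectionsInto_congr
  rw [card_insert_of_notMem (mem_compl.1 hw), card_insert_of_notMem hz]

theorem card_mul_card_bijectionsInto_insert_le (hz : z ∉ S) :
    Fintype.card T * #(bijectionsInto (insert z S) B) ≤ #B * #(bijectionsInto S B) := by
  obtain _ | ⟨⟨π⟩⟩ := isEmpty_or_nonempty (V ≃ T)
  · simp [eq_empty_of_isEmpty]
  have hcompl : #Sᶜ + #S = Fintype.card T := by
    rw [card_compl_add_card, Fintype.card_congr π]
  have hcompl_pos : 0 < #Sᶜ := card_pos.2 ⟨z, mem_compl.2 hz⟩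
  have hratio : Fintype.card T * (#B - #S) ≤ #B * #Sᶜ := by
    obtain hBS | hSB := le_total (#B) (#S)
    · simp [Nat.sub_eq_zero_of_le hBS]
    · have hB : #B ≤ Fintype.card T := card_le_univ B
      zify [hSB] at hcompl hB ⊢
      nlinarith
  refine Nat.le_of_mul_le_mul_left ?_ hcompl_pos
  calc #Sᶜ * (Fintype.card T * #(bijectionsInto (insert z S) B))
      = Fintype.card T * (#B - #S) * #(bijectionsInto S B) := by
        rw [mul_left_comm, card_compl_mul_card_bijectionsInto_insert hz]; ring
    _ ≤ #B * #Sᶜ * #(bijectionsInto S B) := by gcongr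
    _ = #Sᶜ * (#B * #(bijectionsInto S B)) := by ring

theorem card_pow_mul_card_bijectionsInto_le (S : Finset V) (B : Finset T) :
    Fintype.card T ^ #S * #(bijectionsInto S B) ≤ #B ^ #S * Fintype.card (V ≃ T) := by
  induction S using Finset.induction_on with
  | empty => simpa using card_le_univ _
  | insert z S hz ih =>
    rw [card_insert_of_notMem hz, pow_succ, pow_succ]
    calc Fintype.card T ^ #S * Fintype.card T * #(bijectionsInto (insert z S) B)
        = Fintype.card T ^ #S * (Fintype.card T * #(bijectionsInto (insert z S) B)) := by ring
      _ ≤ Fintype.card T ^ #S * (#B * #(bijectionsInto S B)) :=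
        Nat.mul_le_mul_left _ (card_mul_card_bijectionsInto_insert_le hz)
      _ = #B * (Fintype.card T ^ #S * #(bijectionsInto S B)) := by ring
      _ ≤ #B * (#B ^ #S * Fintype.card (V ≃ T)) := Nat.mul_le_mul_left _ ih
      _ = #B ^ #S * #B * Fintype.card (V ≃ T) := by ring

theorem card_bijectionsInto_le_exp_mul [Nonempty T] (S : Finset V) (B : Finset T) :
    (#(bijectionsInto S B) : ℝ) ≤
      Real.exp (-(#S * #Bᶜ / Fintype.card T)) * Fintype.card (V ≃ T) := by
  have hT : (0 : ℝ) < Fintype.card T := mod_cast Fintype.card_pos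
  have hcompl : (#B + #Bᶜ : ℝ) = Fintype.card T := mod_cast card_add_card_compl B
  have hpow : (Fintype.card T : ℝ) ^ #S * #(bijectionsInto S B) ≤
      (#B : ℝ) ^ #S * Fintype.card (V ≃ T) :=
    mod_cast card_pow_mul_card_bijectionsInto_le S B
  have hdensity : (#B / Fintype.card T : ℝ) ≤ Real.exp (-(#Bᶜ / Fintype.card T)) := by
    convert Real.one_sub_le_exp_neg (#Bᶜ / Fintype.card T : ℝ) using 1
    rw [← hcompl] at hT ⊢
    field_simp
    ring
  calc (#(bijectionsInto S B) : ℝ)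
      ≤ (#B / Fintype.card T : ℝ) ^ #S * Fintype.card (V ≃ T) := by
        rwa [div_pow, div_mul_eq_mul_div, le_div_iff₀' (by positivity)]
    _ ≤ Real.exp (-(#Bᶜ / Fintype.card T)) ^ #S * Fintype.card (V ≃ T) := by gcongr
    _ = Real.exp (-(#S * #Bᶜ / Fintype.card T)) * Fintype.card (V ≃ T) := by
        rw [← Real.exp_nat_mul, mul_neg, mul_div_assoc]

end BijectionsInto

section UnionBound

open Finset

theorem one_sub_card_mul_le_card_of_forall_notMem {ι Ω : Type*} [Fintype ι] [Fintype Ω]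
    {good : Finset Ω} {bad : ι → Finset Ω} {ε : ℝ} (hcover : ∀ ω ∉ good, ∃ i, ω ∈ bad i)
    (hbad : ∀ i, (#(bad i) : ℝ) ≤ ε * Fintype.card Ω) :
    (1 - Fintype.card ι * ε) * Fintype.card Ω ≤ #good := by
  classical
  have hsub : goodᶜ ⊆ univ.biUnion bad := fun ω hω => by
    simpa using hcover ω (mem_compl.1 hω)
  have hcompl : (#goodᶜ : ℝ) ≤ Fintype.card ι * (ε * Fintype.card Ω) :=
    calc (#goodᶜ : ℝ) ≤ ∑ i, (#(bad i) : ℝ) := mod_cast (card_le_card hsub).trans card_biUnion_le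
      _ ≤ ∑ _i : ι, ε * Fintype.card Ω := sum_le_sum fun i _ => hbad i
      _ = Fintype.card ι * (ε * Fintype.card Ω) := by simp
  have hcard : (#good + #goodᶜ : ℝ) = Fintype.card Ω := mod_cast card_add_card_compl good
  linarith

end UnionBound

section Thresholds

open Finset

variable {V : Type*} [Fintype V] [DecidableEq V] {n : ℕ} {C R : ℝ}

theorem div_le_mul_floor_div {a m s : ℝ} (ha : 22 ≤ a) (hm : 0 < m) (hs : 0 ≤ s) (hsm : s ≤ m)
    (hR : a * m ≤ (s + 1) * R) (hRm : R < m) : a / 1.1 ≤ s * ⌊R⌋₊ / m := by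
  have hfloor : s * (R - 1) ≤ s * ⌊R⌋₊ := by
    gcongr
    exact (Nat.sub_one_lt_floor R).le
  rw [le_div_iff₀ hm]
  calc a / 1.1 * m ≤ (a - 2) * m := by gcongr; norm_num; linarith
    _ ≤ s * (R - 1) := by linarith
    _ ≤ s * ⌊R⌋₊ := hfloor

theorem le_mul_log_of_two_le (hC : 32 ≤ C) (hn : 2 ≤ n) : 22 ≤ C * Real.log n := by
  have hlog : Real.log 2 ≤ Real.log n := Real.log_le_log two_pos (mod_cast hn)
  nlinarith [Real.log_two_gt_d9]

theorem card_filter_forall_lt_le_rpow_mul (hV : Fintype.card V = n) (hn : 2 ≤ n) (hC : 32 ≤ C)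
    {S : Finset V} (hS : S.Nonempty) (hR : C * Real.log n * n ≤ (#S + 1) * R) :
    (#{π : V ≃ Fin n | ∀ x ∈ S, R < (π x : ℕ) + 1} : ℝ) ≤
      (n : ℝ) ^ (-(C / 1.1)) * Fintype.card (V ≃ Fin n) := by
  let B : Finset (Fin n) := {i | ⌊R⌋₊ ≤ i}
  have hsub : ({π : V ≃ Fin n | ∀ x ∈ S, R < (π x : ℕ) + 1} : Finset _) ⊆ bijectionsInto S B := by
    intro π hπ
    refine mem_bijectionsInto.2 fun x hx => ?_
    have hx' : R < ((π x + 1 : ℕ) : ℝ) := mod_cast (mem_filter.1 hπ).2 x hx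
    simpa [B, Nat.lt_succ_iff] using (Nat.floor_lt' (Nat.succ_ne_zero _)).2 hx'
  refine (Nat.cast_le.2 (card_le_card hsub)).trans ?_
  have hn_pos : (0 : ℝ) < n := by positivity
  obtain hRn | hRn := le_or_gt (n : ℝ) R
  · have hB : B = ∅ := filter_eq_empty_iff.2 fun i _ =>
      (i.2.trans_le (Nat.le_floor hRn)).not_ge
    rw [hB, bijectionsInto_empty_right hS, card_empty, Nat.cast_zero]
    positivity
  have hfloor : ⌊R⌋₊ ≤ n := Nat.floor_le_of_le hRn.le
  have hBc : #Bᶜ = ⌊R⌋₊ := by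
    simp [B, compl_filter, Fin.card_filter_val_lt, hfloor]
  have : NeZero n := ⟨by omega⟩
  have hSn : (#S : ℝ) ≤ n := mod_cast hV ▸ card_le_univ S
  have hexponent : C * Real.log n / 1.1 ≤ #S * ⌊R⌋₊ / n :=
    div_le_mul_floor_div (le_mul_log_of_two_le hC hn) hn_pos (Nat.cast_nonneg _) hSn hR hRn
  calc (#(bijectionsInto S B) : ℝ)
      ≤ Real.exp (-(#S * ⌊R⌋₊ / n)) * Fintype.card (V ≃ Fin n) := by
        simpa [hBc] using card_bijectionsInto_le_exp_mul S B
    _ ≤ Real.exp (-(C * Real.log n / 1.1)) * Fintype.card (V ≃ Fin n) := by gcongr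
    _ = (n : ℝ) ^ (-(C / 1.1)) * Fintype.card (V ≃ Fin n) := by
        rw [Real.rpow_def_of_pos hn_pos]; ring_nf

end Thresholds

section MissesShortestPaths

open Finset

variable {V : Type*} {n M : ℕ} {W : V → V → ℕ∞} {C : ℝ}

/-- The bad event of the pair `(u, v)`: some shortest path from `u` to `v` has an internal vertex,
but `π` places all internal vertices of all shortest paths from `u` to `v` beyond position `R`.
Positions are counted from `1`, hence `π z + 1`. -/
def MissesShortestPaths (W : V → V → ℕ∞) (u v : V) (R : ℝ) (π : V ≃ Fin n) : Prop :=
  (∃ p, IsShortestPath W u v p ∧ p.tail.dropLast ≠ []) ∧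
    ∀ p z, IsShortestPath W u v p → z ∈ p.tail.dropLast → R < (π z : ℕ) + 1

open scoped Classical in
theorem card_missesShortestPaths_le [Fintype V] [DecidableEq V] (hV : Fintype.card V = n)
    (hn : 2 ≤ n) (hC : 32 ≤ C) (hW : ∀ x y, W x y ≠ 0) (hM : ∀ x y, W x y ≠ ⊤ → W x y ≤ M)
    (u v : V) :
    (#{π : V ≃ Fin n | MissesShortestPaths W u v
        (C * M * n * Real.log n / (gdist W u v).toNat) π} : ℝ) ≤
      (n : ℝ) ^ (-(C / 1.1)) * Fintype.card (V ≃ Fin n) := by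
  by_cases hex : ∃ p, IsShortestPath W u v p ∧ p.tail.dropLast ≠ []
  · obtain ⟨p, hp, hne⟩ := hex
    have htail : p.tail ≠ [] := fun h => hne (by simp [h])
    have hd : (0 : ℝ) < (gdist W u v).toNat := mod_cast hp.toNat_gdist_pos hW htail
    have hdM : ((gdist W u v).toNat : ℝ) ≤ (#p.tail.dropLast.toFinset + 1) * M :=
      mod_cast hp.toNat_gdist_le hW hM
    have hCL : 0 ≤ C * Real.log n * n :=
      mul_nonneg (by linarith [le_mul_log_of_two_le hC hn]) n.cast_nonneg
    refine le_trans (Nat.cast_le.2 (card_le_card (monotone_filter_right _ ?_)))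
      (card_filter_forall_lt_le_rpow_mul hV hn hC ((List.toFinset_nonempty_iff _).2 hne) ?_
        (R := C * M * n * Real.log n / (gdist W u v).toNat))
    · exact fun π _ hπ z hz => hπ.2 p z hp (List.mem_toFinset.1 hz)
    · rw [mul_div_assoc', le_div_iff₀ hd]
      linarith [mul_le_mul_of_nonneg_left hdM hCL]
  · simp only [MissesShortestPaths, hex, false_and, filter_false, card_empty, Nat.cast_zero]
    positivity

end MissesShortestPaths

open scoped Classical in
theorem random_bijection_hits_shortest_paths :
    ∃ C₀ : ℝ, ∀ C : ℝ, C₀ ≤ C → ∀ n : ℕ, 2 ≤ n → ∀ M : ℕ, 1 ≤ M →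
      ∀ (V : Type) [Fintype V] [DecidableEq V], Fintype.card V = n →
        ∀ W : V → V → ℕ∞, (∀ x y, W x y = ⊤ ∨ (1 ≤ W x y ∧ W x y ≤ (M : ℕ∞))) →
          ((1 : ℝ) - (n : ℝ) ^ ((2 : ℝ) - C / 1.1)) * Fintype.card (V ≃ Fin n) ≤
            (Finset.univ.filter fun π : V ≃ Fin n =>
              ∀ u v : V, gdist W u v ≠ ⊤ →
                (∃ p, IsShortestPath W u v p ∧ p.tail.dropLast ≠ []) →
                ∃ p z, IsShortestPath W u v p ∧ z ∈ p.tail.dropLast ∧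
                  ((π z : ℕ) + 1 : ℝ) ≤
                    C * M * n * Real.log n / ((gdist W u v).toNat : ℝ)).card := by
  refine ⟨32, fun C hC n hn M _ V _ _ hV W hW => ?_⟩
  have hpos (x y : V) : W x y ≠ 0 := by
    rcases hW x y with h | h
    · simp [h]
    · exact Order.one_le_iff_ne_zero.1 h.1
  have hle (x y : V) (h : W x y ≠ ⊤) : W x y ≤ M := ((hW x y).resolve_left h).2
  have hpairs : (n : ℝ) ^ ((2 : ℝ) - C / 1.1) =
      Fintype.card (V × V) * (n : ℝ) ^ (-(C / 1.1)) := by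
    rw [Fintype.card_prod, hV, sub_eq_add_neg, Real.rpow_add (by positivity), Real.rpow_two]
    push_cast
    ring
  rw [hpairs]
  refine one_sub_card_mul_le_card_of_forall_notMem (fun π hπ => ?_)
    fun q : V × V => card_missesShortestPaths_le hV hn hC hpos hle q.1 q.2
  simp only [Finset.mem_filter, Finset.mem_univ, true_and] at hπ ⊢
  push Not at hπ
  obtain ⟨u, v, -, hex, hmiss⟩ := hπ
  exact ⟨(u, v), hex, hmiss⟩
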